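/- arXiv:1510.05190 — 3 statements merged into one kernel-verified Lean document; each statement's English description precedes it below -/
import Mathlib

section
/- For integers r ≥ k ≥ 1 and t ≥ 2, the set-Ramsey number satisfies R_{r,k}(K_t) = t if and only if r > (r−k)·binomial(t,2). Equivalently: every (r,k)-colouring of K_t contains a monochromatic copy of K_t (a colour appearing on all edges) precisely when r > (r−k)·binomial(t,2), and otherwise there is an (r,k)-colouring of K_t with no colour common to all edges. -/
/-- `φ` is an `(r,k)`-colouring of `K_n`: every (non-loop) edge gets a `k`-element
set of colours from `{1,…,r}`. -/
def IsSetColoring (n r k : ℕ) (φ : Sym2 (Fin n) → Finset (Fin r)) : Prop :=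
  ∀ e : Sym2 (Fin n), ¬ e.IsDiag → (φ e).card = k

/-- The set-coloured `K_n` contains a monochromatic copy of `K_t`: there are a colour
`c` and `t` distinct vertices such that every edge between them carries colour `c`. -/
def HasMonoClique (n r t : ℕ) (φ : Sym2 (Fin n) → Finset (Fin r)) : Prop :=
  ∃ c : Fin r, ∃ f : Fin t ↪ Fin n, ∀ i j : Fin t, i ≠ j → c ∈ φ s(f i, f j)

/-- The set-Ramsey number `R_{r,k}(K_t)`: the least `n` such that every
`(r,k)`-colouring of `K_n` contains a monochromatic copy of `K_t`. -/
noncomputable def setRamseyClique (r k t : ℕ) : ℕ :=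
  sInf {n : ℕ | ∀ φ : Sym2 (Fin n) → Finset (Fin r),
    IsSetColoring n r k φ → HasMonoClique n r t φ}

/-!
For `n < t` no copy of `K_t` fits into `K_n`, so `R_{r,k}(K_t) = t` exactly when every
`(r,k)`-colouring of `K_t` has a colour common to all edges. Pass to complements: each of the
`t.choose 2` edges misses `r - k` colours, and a colour is common to all edges iff no edge misses
it. So the question is whether `t.choose 2` sets of size `r - k` can cover the `r` colours, which
is possible iff `r ≤ (r - k) * t.choose 2`.
-/

section Covering

variable {ι α : Type*} [Fintype ι] [Fintype α]

lemma exists_cover_of_card_le {d : ℕ} (hd : d ≤ Fintype.card α)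
    (h : Fintype.card α ≤ d * Fintype.card ι) :
    ∃ D : ι → Finset α, (∀ i, (D i).card = d) ∧ ∀ a, ∃ i, a ∈ D i := by
  classical
  obtain ⟨g⟩ : Nonempty (α ↪ Fin d × ι) :=
    Function.Embedding.nonempty_of_card_le (by simpa using h)
  let fibre (i : ι) : Finset α := {a | (g a).2 = i}
  have card_fibre_le (i : ι) : (fibre i).card ≤ d := by
    have fst_injOn : Set.InjOn (fun a ↦ (g a).1) (fibre i) := fun a ha b hb hab ↦
      g.injective (Prod.ext hab (by simp_all [fibre]))
    simpa using Finset.card_le_card_of_injOn (t := Finset.univ) _ (by simp) fst_injOn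
  choose D fibre_subset card_D using fun i ↦
    Finset.exists_superset_card_eq (card_fibre_le i) hd
  exact ⟨D, card_D, fun a ↦ ⟨(g a).2, fibre_subset _ (by simp [fibre])⟩⟩

lemma card_le_mul_of_cover {d : ℕ} {D : ι → Finset α} (hD : ∀ i, (D i).card ≤ d)
    (hcover : ∀ a, ∃ i, a ∈ D i) : Fintype.card α ≤ d * Fintype.card ι := by
  classical
  have biUnion_eq : Finset.univ.biUnion D = Finset.univ := by
    simpa [Finset.eq_univ_iff_forall] using hcover
  calc Fintype.card α = (Finset.univ.biUnion D).card := by rw [biUnion_eq, Finset.card_univ]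
    _ ≤ Fintype.card ι * d := Finset.card_biUnion_le_card_mul _ _ _ fun i _ ↦ hD i
    _ = d * Fintype.card ι := mul_comm _ _

lemma forall_exists_common_mem_iff {k : ℕ} (hk : k ≤ Fintype.card α) :
    (∀ s : ι → Finset α, (∀ i, (s i).card = k) → ∃ a, ∀ i, a ∈ s i) ↔
      (Fintype.card α - k) * Fintype.card ι < Fintype.card α := by
  classical
  constructor
  · intro h
    by_contra! hle
    obtain ⟨D, card_D, hcover⟩ := exists_cover_of_card_le (Nat.sub_le _ _) hle
    obtain ⟨a, ha⟩ := h (fun i ↦ (D i)ᶜ) fun i ↦ by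
      rw [Finset.card_compl, card_D, Nat.sub_sub_self hk]
    obtain ⟨i, hi⟩ := hcover a
    exact Finset.mem_compl.1 (ha i) hi
  · intro h s card_s
    by_contra! hno
    refine h.not_ge (card_le_mul_of_cover (D := fun i ↦ (s i)ᶜ) (fun i ↦ ?_) fun a ↦ ?_)
    · rw [Finset.card_compl, card_s]
    · simpa using hno a

end Covering

section SetColoring

variable {n r k t : ℕ}

lemma exists_isSetColoring (n : ℕ) (hrk : k ≤ r) :
    ∃ φ : Sym2 (Fin n) → Finset (Fin r), IsSetColoring n r k φ := by
  obtain ⟨s, -, card_s⟩ := Finset.exists_subset_card_eq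
    (s := (Finset.univ : Finset (Fin r))) (by simpa using hrk)
  exact ⟨fun _ ↦ s, fun _ _ ↦ card_s⟩

lemma HasMonoClique.le {φ : Sym2 (Fin n) → Finset (Fin r)} (h : HasMonoClique n r t φ) :
    t ≤ n := by
  obtain ⟨-, f, -⟩ := h
  simpa using Fintype.card_le_of_embedding f

lemma hasMonoClique_self_iff {φ : Sym2 (Fin t) → Finset (Fin r)} :
    HasMonoClique t r t φ ↔ ∃ c, ∀ e : {e : Sym2 (Fin t) // ¬ e.IsDiag}, c ∈ φ e := by
  constructor
  · rintro ⟨c, f, hf⟩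
    have f_surj : Function.Surjective f := Finite.surjective_of_injective f.injective
    refine ⟨c, fun ⟨e, he⟩ ↦ ?_⟩
    induction e using Sym2.ind with | _ x y
    obtain ⟨i, rfl⟩ := f_surj x
    obtain ⟨j, rfl⟩ := f_surj y
    exact hf i j fun hij ↦ he (by simp [hij])
  · rintro ⟨c, hc⟩
    exact ⟨c, .refl _, fun i j hij ↦ hc ⟨s(i, j), by simpa using hij⟩⟩

lemma forall_hasMonoClique_self_iff_forall_edge_family :
    (∀ φ : Sym2 (Fin t) → Finset (Fin r), IsSetColoring t r k φ → HasMonoClique t r t φ) ↔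
      ∀ s : {e : Sym2 (Fin t) // ¬ e.IsDiag} → Finset (Fin r),
        (∀ e, (s e).card = k) → ∃ c, ∀ e, c ∈ s e := by
  simp only [hasMonoClique_self_iff]
  constructor
  · intro h s card_s
    have extend_edge (e : {e : Sym2 (Fin t) // ¬ e.IsDiag}) :
        Function.extend Subtype.val s (fun _ ↦ ∅) e = s e :=
      Subtype.val_injective.extend_apply _ _ e
    simpa only [extend_edge] using h (Function.extend Subtype.val s fun _ ↦ ∅)
      fun e he ↦ (congrArg Finset.card (extend_edge ⟨e, he⟩)).trans (card_s _)
  · exact fun h φ hφ ↦ h (fun e ↦ φ e) fun e ↦ hφ e e.2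

lemma forall_hasMonoClique_self_iff (hrk : k ≤ r) :
    (∀ φ : Sym2 (Fin t) → Finset (Fin r), IsSetColoring t r k φ → HasMonoClique t r t φ) ↔
      (r - k) * t.choose 2 < r := by
  rw [forall_hasMonoClique_self_iff_forall_edge_family,
    forall_exists_common_mem_iff (by simpa using hrk), Sym2.card_subtype_not_diag,
    Fintype.card_fin, Fintype.card_fin]

lemma setRamseyClique_eq_self_iff (hrk : k ≤ r) (ht : t ≠ 0) :
    setRamseyClique r k t = t ↔
      ∀ φ : Sym2 (Fin t) → Finset (Fin r), IsSetColoring t r k φ → HasMonoClique t r t φ := by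
  constructor
  · intro h
    -- The infimum is `t ≠ 0`, so it is not the junk value of the empty set.
    have hpos : 0 < setRamseyClique r k t := by omega
    have hmem := Nat.sInf_mem (Nat.nonempty_of_pos_sInf hpos)
    rwa [← setRamseyClique, h] at hmem
  · intro h
    refine le_antisymm (Nat.sInf_le h) (le_csInf ⟨t, h⟩ fun n hn ↦ ?_)
    obtain ⟨φ, hφ⟩ := exists_isSetColoring n hrk
    exact (hn φ hφ).le

end SetColoring

/-- **Observation.** For `r ≥ k ≥ 1` and `t ≥ 2`, the set-Ramsey number satisfies
`R_{r,k}(K_t) = t` if and only if `r > (r - k)·(t choose 2)`. -/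
theorem setRamsey_eq_t_iff (r k t : ℕ) (hk : 1 ≤ k) (hrk : k ≤ r) (ht : 2 ≤ t) :
    setRamseyClique r k t = t ↔ (r - k) * t.choose 2 < r := by
  rw [setRamseyClique_eq_self_iff hrk (by omega), forall_hasMonoClique_self_iff hrk]
end

section
/- Let t ≥ 2, r > k ≥ 1, and ε ∈ (0,1) with (t−2)/(t−1) = (1−ε)·(k/r). Then the set-Ramsey number satisfies R_{r,k}(K_t) ≤ 1/ε + 1; equivalently, every (r,k)-colouring of K_n with no monochromatic copy of K_t has n ≤ 1/ε. Moreover, this bound is sharp when k = r−1 = t−1 is a prime power, in which case R_{r,k}(K_t) = k² + 1. -/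
/-!
In a colouring without a monochromatic `K_t` each of the `r` colour graphs is `K_t`-free, so by
Turán it has at most `(t-2)/(t-1) · n²/2 = (1-ε)(k/r) · n²/2` edges. Every edge carries `k` colours,
so the colour graphs have `k · n(n-1)/2` edges altogether, whence `n - 1 ≤ (1-ε) n`.

For sharpness, take a field `F` with `k` elements. The lines of the affine plane `F × F` fall into
`k + 1` parallel classes, and two distinct points lie on a common line of exactly one class. Colour
a pair of points with all the other classes. Assigning to a point its line of class `c` is then a
proper `k`-colouring of the graph of colour `c`, which therefore contains no `K_{k+1}`.
-/

open Finset

section ColorGraph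

variable {V C : Type*}

/-- The graph formed by the edges carrying the colour `c` in a set-colouring `φ` of the complete
graph on `V`; the values of `φ` on loops are ignored. -/
def colorGraph (φ : Sym2 V → Finset C) (c : C) : SimpleGraph V :=
  SimpleGraph.fromEdgeSet {e | c ∈ φ e}

lemma colorGraph_adj {φ : Sym2 V → Finset C} {c : C} {u v : V} :
    (colorGraph φ c).Adj u v ↔ c ∈ φ s(u, v) ∧ u ≠ v :=
  SimpleGraph.fromEdgeSet_adj _

lemma hasMonoClique_iff_exists_not_cliqueFree {n r t : ℕ} {φ : Sym2 (Fin n) → Finset (Fin r)} :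
    HasMonoClique n r t φ ↔ ∃ c, ¬ (colorGraph φ c).CliqueFree t := by
  simp only [SimpleGraph.not_cliqueFree_iff_top_isContained]
  constructor
  · rintro ⟨c, f, hf⟩
    exact ⟨c, ⟨⟨⟨f, fun {i j} hij => colorGraph_adj.2 ⟨hf i j hij, f.injective.ne hij⟩⟩,
      f.injective⟩⟩⟩
  · rintro ⟨c, ⟨f⟩⟩
    exact ⟨c, f.toEmbedding, fun i j hij => (colorGraph_adj.1 (f.toHom.map_adj hij)).1⟩

lemma sum_card_edgeFinset_colorGraph [Fintype V] [Fintype C] [DecidableEq V]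
    (φ : Sym2 V → Finset C) [∀ c, DecidableRel (colorGraph φ c).Adj] :
    ∑ c, #(colorGraph φ c).edgeFinset = ∑ e ∈ (⊤ : SimpleGraph V).edgeFinset, #(φ e) := by
  classical
  have edgeFinset_eq (c : C) : (colorGraph φ c).edgeFinset =
      bipartiteAbove (fun c e => c ∈ φ e) (⊤ : SimpleGraph V).edgeFinset c := by
    ext e
    rw [SimpleGraph.mem_edgeFinset]
    simp [colorGraph, bipartiteAbove, and_comm]
  simp only [edgeFinset_eq]
  rw [sum_card_bipartiteAbove_eq_sum_card_bipartiteBelow]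
  simp [bipartiteBelow]

lemma exists_isSetColoring_not_hasMonoClique [Fintype V] [Fintype C] {ψ : Sym2 V → Finset C}
    {n r k t : ℕ} (hn : n ≤ Fintype.card V) (hr : Fintype.card C = r)
    (hcard : ∀ e, ¬ e.IsDiag → #(ψ e) = k)
    (hfree : ∀ c, (colorGraph ψ c).CliqueFree t) :
    ∃ φ : Sym2 (Fin n) → Finset (Fin r), IsSetColoring n r k φ ∧ ¬ HasMonoClique n r t φ := by
  obtain ⟨g⟩ : Nonempty (Fin n ↪ V) := Function.Embedding.nonempty_of_card_le (by simpa using hn)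
  let σ : C ≃ Fin r := Fintype.equivFinOfCardEq hr
  let φ (e : Sym2 (Fin n)) : Finset (Fin r) := (ψ (e.map g)).map σ.toEmbedding
  refine ⟨φ, fun e he => ?_, ?_⟩
  · rw [card_map]
    exact hcard _ (by rwa [Sym2.isDiag_map g.injective])
  · simp only [hasMonoClique_iff_exists_not_cliqueFree, not_exists, not_not]
    intro c
    have adj_map {u v : Fin n} (huv : (colorGraph φ c).Adj u v) :
        (colorGraph ψ (σ.symm c)).Adj (g u) (g v) := by
      simpa [colorGraph_adj, φ] using huv
    exact (hfree (σ.symm c)).comap ⟨⟨⟨g, adj_map⟩, g.injective⟩⟩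

end ColorGraph

section UpperBound

lemma two_mul_mul_card_edgeFinset_le_of_cliqueFree {V : Type*} [Fintype V] {G : SimpleGraph V}
    [DecidableRel G.Adj] {s : ℕ} (hG : G.CliqueFree (s + 1)) :
    2 * s * #G.edgeFinset ≤ (s - 1) * Fintype.card V ^ 2 := by
  rcases s.eq_zero_or_pos with rfl | hs
  · simp
  obtain ⟨H, _, hH⟩ := SimpleGraph.exists_isTuranMaximal (V := V) hs
  obtain ⟨iso⟩ := (SimpleGraph.isTuranMaximal_iff_nonempty_iso_turanGraph hs).1 hH
  calc 2 * s * #G.edgeFinset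
      ≤ 2 * s * #H.edgeFinset := Nat.mul_le_mul_left _ (hH.2 hG)
    _ = 2 * s * #(SimpleGraph.turanGraph (Fintype.card V) s).edgeFinset := by
        rw [iso.card_edgeFinset_eq]
    _ ≤ (s - 1) * Fintype.card V ^ 2 := SimpleGraph.mul_card_edgeFinset_turanGraph_le

variable {n r k t : ℕ} {φ : Sym2 (Fin n) → Finset (Fin r)}

lemma IsSetColoring.mul_pred_le_of_not_hasMonoClique {s : ℕ} (hφ : IsSetColoring n r k φ)
    (hmono : ¬ HasMonoClique n r (s + 1) φ) : s * k * (n - 1) ≤ (s - 1) * r * n := by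
  classical
  rcases n.eq_zero_or_pos with rfl | hn
  · simp
  have edge_count : ∑ c, #(colorGraph φ c).edgeFinset = n.choose 2 * k := by
    rw [sum_card_edgeFinset_colorGraph, sum_congr rfl fun e he => hφ e (by simpa using he),
      sum_const, SimpleGraph.card_edgeFinset_top_eq_card_choose_two, Fintype.card_fin, smul_eq_mul]
  have turan (c : Fin r) : 2 * s * #(colorGraph φ c).edgeFinset ≤ (s - 1) * n ^ 2 := by
    simp only [hasMonoClique_iff_exists_not_cliqueFree, not_exists, not_not] at hmono
    simpa using two_mul_mul_card_edgeFinset_le_of_cliqueFree (hmono c)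
  have choose_two : n.choose 2 * 2 = n * (n - 1) := by
    rw [Nat.choose_two_right, Nat.div_two_mul_two_of_even (Nat.even_mul_pred_self n)]
  refine Nat.le_of_mul_le_mul_left ?_ hn
  calc n * (s * k * (n - 1))
      = 2 * s * ∑ c, #(colorGraph φ c).edgeFinset := by
        rw [edge_count]
        linear_combination (s * k) * choose_two.symm
    _ ≤ ∑ _c : Fin r, (s - 1) * n ^ 2 := by
        rw [mul_sum]
        exact sum_le_sum fun c _ => turan c
    _ = n * ((s - 1) * r * n) := by
        rw [sum_const, card_univ, Fintype.card_fin, smul_eq_mul]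
        ring

lemma IsSetColoring.le_one_div_of_not_hasMonoClique {ε : ℝ} (hφ : IsSetColoring n r k φ)
    (hmono : ¬ HasMonoClique n r t φ) (ht : 2 ≤ t) (hk : 0 < k) (hr : 0 < r) (hε : 0 < ε)
    (heq : ((t : ℝ) - 2) / ((t : ℝ) - 1) = (1 - ε) * ((k : ℝ) / (r : ℝ))) :
    (n : ℝ) ≤ 1 / ε := by
  rcases n.eq_zero_or_pos with rfl | hn
  · simpa using hε.le
  obtain ⟨s, rfl⟩ := Nat.exists_eq_add_of_le' ht
  have bound : ((s + 1 : ℕ) : ℝ) * k * (n - 1) ≤ s * r * n := by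
    have := hφ.mul_pred_le_of_not_hasMonoClique hmono
    rw [Nat.add_sub_cancel] at this
    rw [← Nat.cast_pred hn]
    exact_mod_cast this
  have density : (s : ℝ) * r = (1 - ε) * (((s + 1 : ℕ) : ℝ) * k) := by
    have : ((s + 1 : ℕ) : ℝ) ≠ 0 := by positivity
    rw [show ((s + 2 : ℕ) : ℝ) - 2 = s by push_cast; ring,
      show ((s + 2 : ℕ) : ℝ) - 1 = (s + 1 : ℕ) by push_cast; ring] at heq
    field_simp at heq
    linarith
  have pred_le : (n : ℝ) - 1 ≤ (1 - ε) * n := by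
    refine le_of_mul_le_mul_left ?_ (by positivity : (0 : ℝ) < ((s + 1 : ℕ) : ℝ) * k)
    rw [density] at bound
    linarith
  rw [le_div_iff₀ hε]
  linarith

end UpperBound

section AffinePlane

variable {F : Type*} [Field F]

/-- The line of the parallel class `c` through a point of the affine plane, recorded by its
intercept: the class `none` consists of the vertical lines, `some a` of those of slope `a`. -/
def lineThrough : Option F → F × F → F
  | none, p => p.1
  | some a, p => p.2 - a * p.1

lemma existsUnique_lineThrough_eq {p q : F × F} (hpq : p ≠ q) :
    ∃! c, lineThrough c p = lineThrough c q := by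
  by_cases hx : p.1 = q.1
  · refine ⟨none, hx, ?_⟩
    rintro (_ | a) ha
    · rfl
    · exact absurd (Prod.ext hx (by simpa [lineThrough, hx] using ha)) hpq
  · have hx' : p.1 - q.1 ≠ 0 := sub_ne_zero.2 hx
    refine ⟨some ((p.2 - q.2) / (p.1 - q.1)), ?_, ?_⟩
    · simp only [lineThrough]
      field_simp
      ring
    · rintro (_ | a) ha
      · exact absurd ha hx
      · simp only [lineThrough] at ha
        rw [Option.some_inj, eq_div_iff hx']
        linear_combination -ha

variable [Fintype F] [DecidableEq F]

/-- The colouring of the pairs of points of the affine plane by parallel classes that shows the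
Turán bound to be sharp: a pair receives every class in which its points lie on different lines. -/
def parallelClassColoring : Sym2 (F × F) → Finset (Option F) :=
  Sym2.lift ⟨fun p q => {c | lineThrough c p ≠ lineThrough c q}, fun p q => by simp only [ne_comm]⟩

lemma mem_parallelClassColoring {p q : F × F} {c : Option F} :
    c ∈ parallelClassColoring s(p, q) ↔ lineThrough c p ≠ lineThrough c q := by
  simp [parallelClassColoring]

lemma card_parallelClassColoring {e : Sym2 (F × F)} (he : ¬ e.IsDiag) :
    #(parallelClassColoring e) = Fintype.card F := by
  induction e with | _ p q
  obtain ⟨c, hc, hunique⟩ := existsUnique_lineThrough_eq (by simpa using he : p ≠ q)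
  have eq_erase : parallelClassColoring s(p, q) = univ.erase c := by
    ext b
    rw [mem_parallelClassColoring, mem_erase, and_iff_left (mem_univ b)]
    exact not_congr ⟨hunique b, fun hb => hb ▸ hc⟩
  rw [eq_erase, card_erase_of_mem (mem_univ c), card_univ, Fintype.card_option, Nat.add_sub_cancel]

lemma colorGraph_parallelClassColoring_cliqueFree (c : Option F) :
    (colorGraph parallelClassColoring c).CliqueFree (Fintype.card F + 1) := by
  let lineColoring : (colorGraph parallelClassColoring c).Coloring F :=
    .mk (lineThrough c) fun hpq => mem_parallelClassColoring.1 (colorGraph_adj.1 hpq).1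
  exact lineColoring.colorable.cliqueFree (Nat.lt_succ_self _)

end AffinePlane

section RamseyNumber

variable {r k t : ℕ}

lemma setRamseyClique_eq_add_one {N : ℕ}
    (hupper : ∀ φ : Sym2 (Fin (N + 1)) → Finset (Fin r),
      IsSetColoring (N + 1) r k φ → HasMonoClique (N + 1) r t φ)
    (hlower : ∀ n ≤ N, ∃ φ : Sym2 (Fin n) → Finset (Fin r),
      IsSetColoring n r k φ ∧ ¬ HasMonoClique n r t φ) :
    setRamseyClique r k t = N + 1 := by
  refine le_antisymm (Nat.sInf_le hupper) (le_csInf ⟨_, hupper⟩ fun n hn => ?_)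
  by_contra! hnN
  obtain ⟨φ, hφ, hmono⟩ := hlower n (Nat.lt_succ_iff.1 hnN)
  exact hmono (hn φ hφ)

lemma setRamseyClique_le_one_div_add_one {ε : ℝ} (ht : 2 ≤ t) (hk : 0 < k) (hr : 0 < r)
    (hε : 0 < ε) (heq : ((t : ℝ) - 2) / ((t : ℝ) - 1) = (1 - ε) * ((k : ℝ) / (r : ℝ))) :
    (setRamseyClique r k t : ℝ) ≤ 1 / ε + 1 := by
  have le_floor : setRamseyClique r k t ≤ ⌊1 / ε⌋₊ + 1 := by
    refine Nat.sInf_le fun φ hφ => ?_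
    by_contra hmono
    exact absurd (Nat.le_floor (hφ.le_one_div_of_not_hasMonoClique hmono ht hk hr hε heq))
      (Nat.not_succ_le_self _)
  calc (setRamseyClique r k t : ℝ)
      ≤ ⌊1 / ε⌋₊ + 1 := mod_cast le_floor
    _ ≤ 1 / ε + 1 := by grw [Nat.floor_le (by positivity)]

lemma setRamseyClique_card_field (F : Type*) [Field F] [Fintype F] :
    setRamseyClique (Fintype.card F + 1) (Fintype.card F) (Fintype.card F + 1) =
      Fintype.card F ^ 2 + 1 := by
  classical
  refine setRamseyClique_eq_add_one (fun φ hφ => ?_) fun n hn => ?_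
  · by_contra hmono
    have bound := hφ.mul_pred_le_of_not_hasMonoClique hmono
    obtain ⟨q, hq⟩ := Nat.exists_eq_add_of_le' (Fintype.card_pos (α := F))
    simp only [hq, Nat.add_sub_cancel] at bound
    -- With `k = q + 1` the bound reads `k⁴ ≤ (k - 1) (k + 1) (k² + 1) = k⁴ - 1`.
    linarith
  · exact exists_isSetColoring_not_hasMonoClique (by rwa [Fintype.card_prod, ← sq])
      Fintype.card_option (fun e he => card_parallelClassColoring he)
      colorGraph_parallelClassColoring_cliqueFree

lemma setRamseyClique_of_isPrimePow (hk : IsPrimePow k) :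
    setRamseyClique (k + 1) k (k + 1) = k ^ 2 + 1 := by
  obtain ⟨_⟩ : Nonempty (Field (Fin k)) := Fintype.nonempty_field_iff.2 (by rwa [Fintype.card_fin])
  simpa only [Fintype.card_fin] using setRamseyClique_card_field (Fin k)

end RamseyNumber

/-- **Proposition (Turán bound).** Let `t ≥ 2`, `r > k ≥ 1` and `ε ∈ (0,1)` with
`(t-2)/(t-1) = (1-ε)·(k/r)`. Then `R_{r,k}(K_t) ≤ 1/ε + 1`. Moreover, if
`k = r - 1 = t - 1` is a prime power, then `R_{r,k}(K_t) = k² + 1`. -/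
theorem setRamsey_turan_bound (r k t : ℕ) (ht : 2 ≤ t) (hk : 1 ≤ k) (hrk : k < r)
    (ε : ℝ) (hε0 : 0 < ε) (hε1 : ε < 1)
    (heq : ((t : ℝ) - 2) / ((t : ℝ) - 1) = (1 - ε) * ((k : ℝ) / (r : ℝ))) :
    (setRamseyClique r k t : ℝ) ≤ 1 / ε + 1 ∧
    (k = r - 1 → k = t - 1 → IsPrimePow k → setRamseyClique r k t = k ^ 2 + 1) := by
  refine ⟨setRamseyClique_le_one_div_add_one ht hk (hk.trans hrk.le) hε0 heq, fun hkr hkt hpp => ?_⟩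
  obtain rfl : r = k + 1 := by omega
  obtain rfl : t = k + 1 := by omega
  exact setRamseyClique_of_isPrimePow hpp
end

section
/- For every odd integer ℓ ≥ 3 and all integers r ≥ k ≥ 2, the set-Ramsey number of the cycle C_ℓ satisfies R_{r,k}(C_ℓ) > max{ 2^{(r−1)/(k−1)}, 2^{⌊r/k⌋−1}·(ℓ−1) }, where 2^{(r−1)/(k−1)} is interpreted as a real power. Equivalently, there exist (r,k)-colourings of the complete graphs on ⌊2^{(r−1)/(k−1)}⌋ and on 2^{⌊r/k⌋−1}(ℓ−1) vertices containing no monochromatic copy of C_ℓ. -/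
/-- The set-coloured `K_n` contains a monochromatic copy of the cycle `C_ℓ`: there are
a colour `c` and `ℓ` distinct vertices, cyclically ordered, with all consecutive edges
carrying colour `c`. -/
def HasMonoCycle (n r ℓ : ℕ) (φ : Sym2 (Fin n) → Finset (Fin r)) : Prop :=
  ∃ c : Fin r, ∃ f : Fin ℓ ↪ Fin n,
    ∀ i : Fin ℓ, c ∈ φ s(f i, f ⟨(i.val + 1) % ℓ, Nat.mod_lt _ i.pos⟩)

/-- The set-Ramsey number `R_{r,k}(C_ℓ)`: the least `n` such that every
`(r,k)`-colouring of `K_n` contains a monochromatic copy of `C_ℓ`. -/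
noncomputable def setRamseyCycle (r k ℓ : ℕ) : ℕ :=
  sInf {n : ℕ | ∀ φ : Sym2 (Fin n) → Finset (Fin r),
    IsSetColoring n r k φ → HasMonoCycle n r ℓ φ}

/-!
Ramsey's theorem makes the infimum defining `R_{r,k}(C_ℓ)` attained, so `|V| < R_{r,k}(C_ℓ)` as
soon as there are `r` graphs on `V`, none containing `C_ℓ`, such that every pair of vertices is an
edge of at least `k` of them.

*The bound `2^((r-1)/(k-1))`.* A binary code of length `r` and minimum distance `k` gives such
graphs on its words: the `i`-th one joins the words that differ in position `i`, and is bipartite.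
There are two words if `r ≥ k` and four if `2r ≥ 3k`; applying Plotkin's `(u | u + v)` to four words
of length `k` and distance `⌈k/2⌉` gives eight if `r ≥ 2k`. From there on, `k - 1` additional
positions double the number of words: take two copies of the code, tell them apart in the new
positions, and flip one old position throughout the second copy. As `k ≥ 2`, words from different
copies then still differ in an old position. So `2^(m+3)` words fit into length `2k + m(k-1)`, and
`(r-1)/(k-1) ≤ m + 3` for the largest `m` with `2k + m(k-1) ≤ r`. For `2r < 3k` the bound is less
than `3`, and for `3k ≤ 2r < 4k` it is at most `4`.

*The bound `2^(q-1) (ℓ-1)`, `q = ⌊r/k⌋`.* Index `2^(q-1)` groups of `ℓ - 1` vertices by bit strings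
and split the colours into `q` blocks of size at least `k`. The colours of each of `q - 1` blocks
join the groups whose strings differ in a given bit, which is bipartite; those of the last block
fill the groups, which are too small for `C_ℓ`.
-/

open Finset SimpleGraph

universe u

section Ramsey

variable {K : Type*}

lemma exists_lt_card_filter_adj [Fintype K] {V : Type*} {G : K → SimpleGraph V}
    [∀ c, DecidableRel (G c).Adj] (hG : ∀ a b, a ≠ b → ∃ c, (G c).Adj a b) {S : Finset V} {v : V}
    {n : K → ℕ} (hS : ∑ c, n c + 1 < #S) : ∃ c, n c < #{w ∈ S | (G c).Adj v w} := by
  classical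
  have hcover : S.erase v ⊆ univ.biUnion fun c ↦ {w ∈ S | (G c).Adj v w} := by
    intro w hw
    obtain ⟨hwv, hwS⟩ := mem_erase.mp hw
    obtain ⟨c, hc⟩ := hG v w hwv.symm
    exact mem_biUnion.mpr ⟨c, mem_univ c, mem_filter.mpr ⟨hwS, hc⟩⟩
  have hcard : ∑ c, n c < ∑ c, #{w ∈ S | (G c).Adj v w} :=
    calc ∑ c, n c < #S - 1 := by omega
      _ ≤ #(S.erase v) := pred_card_le_card_erase
      _ ≤ _ := (card_le_card hcover).trans card_biUnion_le
  obtain ⟨c, -, hc⟩ := exists_lt_of_sum_lt hcard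
  exact ⟨c, hc⟩

theorem exists_forall_exists_isNClique [Finite K] (s : K → ℕ) :
    ∃ n, ∀ {V : Type u} (G : K → SimpleGraph V), (∀ a b, a ≠ b → ∃ c, (G c).Adj a b) →
      ∀ S : Finset V, n ≤ #S → ∃ c, ∃ T ⊆ S, (G c).IsNClique (s c) T := by
  classical
  cases nonempty_fintype K
  induction s using WellFoundedLT.induction with | ind s ih
  by_cases hs : ∃ c, s c = 0
  · obtain ⟨c, hc⟩ := hs
    exact ⟨0, fun G _ S _ ↦ ⟨c, ∅, empty_subset S, by simp [hc]⟩⟩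
  push Not at hs
  have hlt (c : K) : Function.update s c (s c - 1) < s :=
    update_lt_self_iff.mpr (Nat.sub_one_lt (hs c))
  choose n hn using fun c ↦ ih _ (hlt c)
  refine ⟨∑ c, n c + 2, fun {V} G hG S hS ↦ ?_⟩
  obtain ⟨v, hv⟩ : S.Nonempty := card_pos.mp (by omega)
  obtain ⟨c, hc⟩ := exists_lt_card_filter_adj hG (v := v) (n := n) hS
  obtain ⟨d, T, hTS, hT⟩ := hn c G hG _ hc.le
  have hTS' : T ⊆ S := hTS.trans (filter_subset _ S)
  obtain rfl | hdc := eq_or_ne d c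
  · rw [Function.update_self] at hT
    refine ⟨d, insert v T, insert_subset hv hTS', ?_⟩
    rw [← Nat.sub_one_add_one (hs d)]
    exact hT.insert fun w hw ↦ (mem_filter.mp (hTS hw)).2
  · rw [Function.update_of_ne hdc] at hT
    exact ⟨d, T, hTS', hT⟩

end Ramsey

section ColorClasses

variable {V W K L : Type*}

/-- The colour class of `c`: the graph of all pairs whose colour set contains `c`. -/
def colorClass (φ : Sym2 V → Finset K) (c : K) : SimpleGraph V :=
  fromEdgeSet {e | c ∈ φ e}

lemma hasMonoCycle_iff {n r ℓ : ℕ} (hℓ : 2 ≤ ℓ) {φ : Sym2 (Fin n) → Finset (Fin r)} :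
    HasMonoCycle n r ℓ φ ↔ ∃ c, cycleGraph ℓ ⊑ colorClass φ c := by
  obtain ⟨m, rfl⟩ := Nat.exists_eq_add_of_le' hℓ
  have hsucc (i : Fin (m + 2)) : ⟨(i.val + 1) % (m + 2), Nat.mod_lt _ i.pos⟩ = i + 1 :=
    Fin.ext (by simp [Fin.val_add])
  simp only [HasMonoCycle, hsucc]
  refine exists_congr fun c ↦ ⟨?_, ?_⟩
  · rintro ⟨f, hf⟩
    refine ⟨⟨f, fun {i j} hij ↦ ?_⟩, f.injective⟩
    refine (fromEdgeSet_adj _).mpr ⟨?_, f.injective.ne hij.ne⟩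
    obtain h | h := cycleGraph_adj.mp hij
    · rw [sub_eq_iff_eq_add'.mp h, Sym2.eq_swap]
      exact hf j
    · rw [sub_eq_iff_eq_add'.mp h]
      exact hf i
  · rintro ⟨f⟩
    refine ⟨f.toEmbedding, fun i ↦ ?_⟩
    have hadj : (cycleGraph (m + 2)).Adj i (i + 1) := cycleGraph_adj.mpr (by simp)
    exact ((fromEdgeSet_adj _).mp (f.toHom.map_adj hadj)).1

theorem exists_forall_hasMonoCycle (r : ℕ) {k ℓ : ℕ} (hk : k ≠ 0) (hℓ : 2 ≤ ℓ) :
    ∃ n, ∀ φ : Sym2 (Fin n) → Finset (Fin r), IsSetColoring n r k φ → HasMonoCycle n r ℓ φ := by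
  obtain ⟨n, hn⟩ := exists_forall_exists_isNClique fun _ : Fin r ↦ ℓ
  refine ⟨n, fun φ hφ ↦ (hasMonoCycle_iff hℓ).mpr ?_⟩
  have hcover (a b : Fin n) (hab : a ≠ b) : ∃ c, (colorClass φ c).Adj a b := by
    obtain ⟨c, hc⟩ : (φ s(a, b)).Nonempty :=
      card_ne_zero.mp ((hφ s(a, b) (by simpa using hab)).trans_ne hk)
    exact ⟨c, (fromEdgeSet_adj _).mpr ⟨hc, hab⟩⟩
  obtain ⟨c, T, -, hT⟩ := hn (colorClass φ) hcover univ (by simp)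
  exact ⟨c, ((not_cliqueFree_iff_top_isContained ℓ).mp hT.not_cliqueFree).mono_left le_top⟩

lemma hasMonoCycle_setRamseyCycle {r k ℓ : ℕ} (hk : k ≠ 0) (hℓ : 2 ≤ ℓ)
    {φ : Sym2 (Fin (setRamseyCycle r k ℓ)) → Finset (Fin r)} (hφ : IsSetColoring _ r k φ) :
    HasMonoCycle _ r ℓ φ :=
  Nat.sInf_mem (exists_forall_hasMonoCycle r hk hℓ) φ hφ

/-- A family of graphs on `V` is a `k`-fold cover if any two distinct vertices are adjacent in at
least `k` of its members. These are the families of colour classes of set-colourings, with exactly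
`k` colours per pair relaxed to at least `k`. -/
def IsFoldCover (k : ℕ) (G : K → SimpleGraph V) : Prop :=
  ∀ ⦃a b : V⦄, a ≠ b → k ≤ {c | (G c).Adj a b}.ncard

lemma IsFoldCover.comap {k : ℕ} {G : K → SimpleGraph V} (hG : IsFoldCover k G) {g : W → V}
    (hg : Function.Injective g) : IsFoldCover k fun c ↦ (G c).comap g :=
  fun _ _ hab ↦ hG (hg.ne hab)

lemma isFoldCover_comp [Finite L] {k : ℕ} {G : K → SimpleGraph V}
    (hG : ∀ a b, a ≠ b → ∃ c, (G c).Adj a b) {σ : L → K}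
    (hσ : ∀ c, k ≤ (σ ⁻¹' {c}).ncard) : IsFoldCover k (G ∘ σ) := by
  intro a b hab
  obtain ⟨c, hc⟩ := hG a b hab
  refine (hσ c).trans (Set.ncard_le_ncard ?_)
  rintro l rfl
  exact hc

lemma exists_le_ncard_fiber [Fintype K] [Nonempty K] [Fintype L] {k : ℕ}
    (h : Fintype.card K * k ≤ Fintype.card L) :
    ∃ σ : L → K, ∀ c, k ≤ (σ ⁻¹' {c}).ncard := by
  obtain ⟨e⟩ : Nonempty (K × Fin k ↪ L) :=
    Function.Embedding.nonempty_of_card_le (by simpa using h)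
  refine ⟨Function.extend e Prod.fst fun _ ↦ Classical.arbitrary K, fun c ↦ ?_⟩
  have hinj : Function.Injective fun i ↦ e (c, i) := e.injective.comp (Prod.mk_right_injective c)
  calc k = (Set.range fun i ↦ e (c, i)).ncard := by
        rw [← Nat.card_coe_set_eq, Nat.card_range_of_injective hinj, Nat.card_fin]
    _ ≤ _ := Set.ncard_le_ncard <| by
        rintro _ ⟨i, rfl⟩
        exact e.injective.extend_apply _ _ _

lemma IsFoldCover.exists_isSetColoring {n r k : ℕ} {G : Fin r → SimpleGraph (Fin n)}
    (hG : IsFoldCover k G) : ∃ φ, IsSetColoring n r k φ ∧ ∀ c, colorClass φ c ≤ G c := by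
  have hchoice (e : Sym2 (Fin n)) (he : ¬ e.IsDiag) :
      ∃ s : Finset (Fin r), #s = k ∧ ∀ c ∈ s, e ∈ (G c).edgeSet := by
    classical
    induction e using Sym2.ind with | _ a b
    have hab := hG (Sym2.mk_isDiag_iff.not.mp he)
    rw [Set.ncard_eq_toFinset_card'] at hab
    obtain ⟨s, hs, hcard⟩ := exists_subset_card_eq hab
    exact ⟨s, hcard, fun c hc ↦ by simpa using hs hc⟩
  choose! φ hcard hmem using hchoice
  refine ⟨φ, hcard, fun c a b hab ↦ ?_⟩
  obtain ⟨hc, hne⟩ := (fromEdgeSet_adj _).mp hab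
  exact hmem _ (Sym2.mk_isDiag_iff.not.mpr hne) c hc

theorem IsFoldCover.card_lt_setRamseyCycle [Fintype V] {r k ℓ : ℕ} {G : Fin r → SimpleGraph V}
    (hG : IsFoldCover k G) (hk : k ≠ 0) (hℓ : 2 ≤ ℓ) (hfree : ∀ c, (cycleGraph ℓ).Free (G c)) :
    Fintype.card V < setRamseyCycle r k ℓ := by
  by_contra! hle
  obtain ⟨g⟩ : Nonempty (Fin (setRamseyCycle r k ℓ) ↪ V) :=
    Function.Embedding.nonempty_of_card_le (by simpa using hle)
  obtain ⟨φ, hφ, hφG⟩ := (hG.comap g.injective).exists_isSetColoring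
  obtain ⟨c, hc⟩ := (hasMonoCycle_iff hℓ).mp (hasMonoCycle_setRamseyCycle hk hℓ hφ)
  exact hfree c ((hc.mono_right (hφG c)).trans ⟨(Embedding.comap g (G c)).toCopy⟩)

end ColorClasses

section CycleFree

variable {U V W : Type*}

lemma cycleGraph_free_of_colorable_two {ℓ : ℕ} (hℓ : 2 ≤ ℓ) (hodd : Odd ℓ) {G : SimpleGraph V}
    (hG : G.Colorable 2) : (cycleGraph ℓ).Free G := by
  rintro ⟨f⟩
  have h := (hG.of_hom f.toHom).chromaticNumber_le
  rw [chromaticNumber_cycleGraph_of_odd ℓ hℓ hodd] at h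
  exact absurd h (by decide)

lemma cycleGraph_free_comap_top {ℓ : ℕ} (hℓ : 2 ≤ ℓ) (hodd : Odd ℓ) (f : V → ZMod 2) :
    (cycleGraph ℓ).Free ((⊤ : SimpleGraph (ZMod 2)).comap f) :=
  cycleGraph_free_of_colorable_two hℓ hodd (Coloring.mk f id : Coloring _ (ZMod 2)).colorable

lemma free_bot_boxProd {H : SimpleGraph U} {G : SimpleGraph V} (hH : H.Preconnected)
    (hG : H.Free G) : H.Free ((⊥ : SimpleGraph W) □ G) := by
  rintro ⟨f⟩
  have hadj {u v : U} (h : H.Adj u v) : G.Adj (f u).2 (f v).2 ∧ (f u).1 = (f v).1 := by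
    simpa [boxProd_adj] using f.toHom.map_adj h
  have hconst (u v : U) : (f u).1 = (f v).1 := by
    obtain ⟨p⟩ := hH u v
    induction p with
    | nil => rfl
    | cons h _ ih => exact (hadj h).2.trans ih
  exact hG ⟨⟨fun u ↦ (f u).2, fun h ↦ (hadj h).1⟩,
    fun u v huv ↦ f.injective (Prod.ext (hconst u v) huv)⟩

end CycleFree

theorem two_pow_mul_lt_setRamseyCycle {r k ℓ p : ℕ} (hk : k ≠ 0) (hr : (p + 1) * k ≤ r)
    (hℓ : 2 ≤ ℓ) (hodd : Odd ℓ) : 2 ^ p * (ℓ - 1) < setRamseyCycle r k ℓ := by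
  let G : Option (Fin p) → SimpleGraph ((Fin p → ZMod 2) × Fin (ℓ - 1))
    | none => ⊥ □ ⊤
    | some t => (⊤ : SimpleGraph (ZMod 2)).comap fun a ↦ a.1 t
  have hcover (a b) (hab : a ≠ b) : ∃ c, (G c).Adj a b := by
    by_cases h : a.1 = b.1
    · exact ⟨none, boxProd_adj.mpr (.inr ⟨fun h' ↦ hab (Prod.ext h h'), h⟩)⟩
    · obtain ⟨t, ht⟩ := Function.ne_iff.mp h
      exact ⟨some t, ht⟩
  have hfree (c) : (cycleGraph ℓ).Free (G c) := by
    cases c with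
    | none =>
      refine free_bot_boxProd cycleGraph_preconnected fun ⟨f⟩ ↦ ?_
      have hcard := Fintype.card_le_of_injective f f.injective
      rw [Fintype.card_fin, Fintype.card_fin] at hcard
      omega
    | some t => exact cycleGraph_free_comap_top hℓ hodd _
  obtain ⟨σ, hσ⟩ := exists_le_ncard_fiber (K := Option (Fin p)) (L := Fin r) (k := k) (by simpa)
  simpa using (isFoldCover_comp hcover hσ).card_lt_setRamseyCycle hk hℓ fun c ↦ hfree (σ c)

section HammingDist

variable {ι κ α : Type*} [Fintype ι] [Fintype κ] [DecidableEq α]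

lemma hammingDist_sumElim (x x' : ι → α) (y y' : κ → α) :
    hammingDist (Sum.elim x y) (Sum.elim x' y') = hammingDist x x' + hammingDist y y' := by
  simp only [hammingDist, card_filter, Fintype.sum_sum_type]
  rfl

lemma hammingDist_const_of_ne {a b : α} (hab : a ≠ b) :
    hammingDist (fun _ : ι ↦ a) (fun _ ↦ b) = Fintype.card ι := by
  simp [hammingDist, hab]

lemma hammingDist_add_right [AddGroup α] (x y z : ι → α) :
    hammingDist (x + z) (y + z) = hammingDist x y :=
  hammingDist_comp (fun i a ↦ a + z i) fun i ↦ add_left_injective (z i)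

lemma hammingDist_le_hammingDist_extend (e : ι ↪ κ) (x y : ι → α) (z : κ → α) :
    hammingDist x y ≤ hammingDist (Function.extend e x z) (Function.extend e y z) :=
  card_le_card_of_injOn e (fun i hi ↦ by simpa [e.injective.extend_apply] using hi)
    e.injective.injOn

lemma hammingDist_add_hammingDist_add_const (x y : ι → ZMod 2) {a b : ZMod 2} (hab : a ≠ b) :
    hammingDist x y + hammingDist (x + fun _ ↦ a) (y + fun _ ↦ b) = Fintype.card ι := by
  have hbit : ∀ a b s t : ZMod 2, a ≠ b → (s + a ≠ t + b ↔ ¬ s ≠ t) := by decide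
  simp only [hammingDist, Pi.add_apply, hbit a b _ _ hab]
  exact card_filter_add_card_filter_not _

end HammingDist

/-- Existence of a binary `(n, M, d)`-code: `M` words of length `n`, given as an indexed family, at
pairwise Hamming distance at least `d`. -/
def HasBinaryCode (n M d : ℕ) : Prop :=
  ∃ w : Fin M → Fin n → ZMod 2, Pairwise fun a b ↦ d ≤ hammingDist (w a) (w b)

namespace HasBinaryCode

variable {n M d : ℕ}

lemma of_words {V I : Type*} [Fintype V] [Fintype I] (w : V → I → ZMod 2)
    (hw : Pairwise fun a b ↦ d ≤ hammingDist (w a) (w b)) (hV : Fintype.card V = M)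
    (hI : Fintype.card I ≤ n) : HasBinaryCode n M d := by
  obtain ⟨e⟩ : Nonempty (I ↪ Fin n) := Function.Embedding.nonempty_of_card_le (by simpa using hI)
  refine ⟨fun a ↦ Function.extend e (w ((Fintype.equivFinOfCardEq hV).symm a)) 0, fun a b hab ↦ ?_⟩
  exact (hw (Equiv.injective _ |>.ne hab)).trans (hammingDist_le_hammingDist_extend e _ _ 0)

lemma mono {n' d' : ℕ} (h : HasBinaryCode n M d) (hn : n ≤ n') (hd : d' ≤ d) :
    HasBinaryCode n' M d' := by
  obtain ⟨w, hw⟩ := h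
  exact of_words w (fun a b hab ↦ hd.trans (hw hab)) (by simp) (by simpa using hn)

lemma two_words (n : ℕ) : HasBinaryCode n 2 n :=
  of_words (V := ZMod 2) (I := Fin n) (fun x _ ↦ x)
    (fun x y hxy ↦ by simp [hammingDist_const_of_ne hxy]) (ZMod.card 2) (by simp)

lemma four_words (h : 3 * d ≤ 2 * n) : HasBinaryCode n 4 d := by
  -- Any two of the three blocks have total length at least `d`.
  refine of_words (V := ZMod 2 × ZMod 2) (I := Fin (d - d / 2) ⊕ Fin (d - d / 2) ⊕ Fin (d / 2))
    (fun v ↦ Sum.elim (fun _ ↦ v.1) (Sum.elim (fun _ ↦ v.2) fun _ ↦ v.1 + v.2)) ?_ (by simp)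
    (by simp only [Fintype.card_sum, Fintype.card_fin]; omega)
  rintro ⟨x, y⟩ ⟨x', y'⟩ hne
  simp only [hammingDist_sumElim]
  by_cases hx : x = x'
  · subst hx
    have hy : y ≠ y' := fun h ↦ hne (by rw [h])
    have hxy : x + y ≠ x + y' := (add_right_injective x).ne hy
    simp only [hammingDist_const_of_ne hy, hammingDist_const_of_ne hxy, Fintype.card_fin]
    omega
  by_cases hy : y = y'
  · subst hy
    have hxy : x + y ≠ x' + y := (add_left_injective y).ne hx
    simp only [hammingDist_const_of_ne hx, hammingDist_const_of_ne hxy, Fintype.card_fin]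
    omega
  · simp only [hammingDist_const_of_ne hx, hammingDist_const_of_ne hy, Fintype.card_fin]
    omega

lemma plotkin (h : HasBinaryCode n M d) : HasBinaryCode (2 * n) (2 * M) (min (2 * d) n) := by
  obtain ⟨w, hw⟩ := h
  refine of_words (V := ZMod 2 × Fin M) (I := Fin n ⊕ Fin n)
    (fun v ↦ Sum.elim (w v.2) (w v.2 + fun _ ↦ v.1)) ?_ (by simp) (by simp [two_mul])
  rintro ⟨b, a⟩ ⟨b', a'⟩ hne
  simp only [hammingDist_sumElim]
  by_cases hb : b = b'
  · subst hb
    have ha : d ≤ hammingDist (w a) (w a') := hw fun h ↦ hne (by rw [h])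
    rw [hammingDist_add_right]
    omega
  · rw [hammingDist_add_hammingDist_add_const _ _ hb, Fintype.card_fin]
    exact min_le_right _ _

lemma double (h : HasBinaryCode n M d) (hn : 0 < n) (hd : 2 ≤ d) :
    HasBinaryCode (n + (d - 1)) (2 * M) d := by
  obtain ⟨w, hw⟩ := h
  let i₀ : Fin n := ⟨0, hn⟩
  refine of_words (V := ZMod 2 × Fin M) (I := Fin n ⊕ Fin (d - 1))
    (fun v ↦ Sum.elim (w v.2 + Pi.single i₀ v.1) fun _ ↦ v.1) ?_ (by simp) (by simp)
  rintro ⟨b, a⟩ ⟨b', a'⟩ hne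
  simp only [hammingDist_sumElim]
  by_cases hb : b = b'
  · subst hb
    rw [hammingDist_add_right, hammingDist_self, add_zero]
    exact hw fun h ↦ hne (by rw [h])
  have hpos : 0 < hammingDist (w a + Pi.single i₀ b) (w a' + Pi.single i₀ b') := by
    refine hammingDist_pos.mpr fun heq ↦ ?_
    have hdiff (i) (hi : w a i ≠ w a' i) : i = i₀ := by
      by_contra hi₀
      exact hi (by simpa [hi₀] using congrFun heq i)
    have hle : hammingDist (w a) (w a') ≤ 1 :=
      card_le_one.mpr fun i hi j hj ↦
        (hdiff i (mem_filter.mp hi).2).trans (hdiff j (mem_filter.mp hj).2).symm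
    obtain rfl : a = a' := by
      by_contra ha
      have := hw ha
      omega
    exact hb (Pi.single_injective i₀ (add_left_cancel heq))
  rw [hammingDist_const_of_ne hb, Fintype.card_fin]
  omega

lemma eight_words (hd : 2 ≤ d) : HasBinaryCode (2 * d) 8 d :=
  (four_words (n := d) (d := (d + 1) / 2) (by omega)).plotkin.mono le_rfl (by omega)

lemma two_pow_words (hd : 2 ≤ d) (m : ℕ) : HasBinaryCode (2 * d + m * (d - 1)) (2 ^ (m + 3)) d := by
  induction m with
  | zero => simpa using eight_words hd
  | succ m ih =>
    rw [add_one_mul, ← add_assoc, add_right_comm m, pow_succ']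
    exact ih.double (by omega) hd

theorem lt_setRamseyCycle {ℓ : ℕ} (h : HasBinaryCode n M d) (hd : d ≠ 0) (hℓ : 2 ≤ ℓ)
    (hodd : Odd ℓ) : M < setRamseyCycle n d ℓ := by
  obtain ⟨w, hw⟩ := h
  let G (i : Fin n) : SimpleGraph (Fin M) := (⊤ : SimpleGraph (ZMod 2)).comap fun a ↦ w a i
  have hG : IsFoldCover d G := fun a b hab ↦ by
    simpa [G, hammingDist, Set.ncard_eq_toFinset_card'] using hw hab
  simpa using hG.card_lt_setRamseyCycle hd hℓ fun i ↦
    cycleGraph_free_comap_top hℓ hodd fun a ↦ w a i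

end HasBinaryCode

lemma two_rpow_div_le_two_pow {r k m : ℕ} (hk : 2 ≤ k) (h : r - 1 ≤ m * (k - 1)) :
    (2 : ℝ) ^ (((r : ℝ) - 1) / ((k : ℝ) - 1)) ≤ (2 ^ m : ℕ) := by
  have hk' : (2 : ℝ) ≤ k := by exact_mod_cast hk
  have h' : (r : ℝ) ≤ m * (k - 1) + 1 := by
    rw [← Nat.cast_pred (by omega)]
    exact_mod_cast Nat.sub_le_iff_le_add.mp h
  rw [Nat.cast_pow, Nat.cast_ofNat, ← Real.rpow_natCast]
  refine Real.rpow_le_rpow_of_exponent_le one_le_two ?_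
  rw [div_le_iff₀ (by linarith)]
  linarith

lemma two_rpow_lt_three {x : ℝ} (hx : x ≤ 3 / 2) : (2 : ℝ) ^ x < 3 := by
  have hsq : ((2 : ℝ) ^ (3 / 2 : ℝ)) ^ 2 = 8 := by
    rw [← Real.rpow_natCast, ← Real.rpow_mul zero_le_two]
    norm_num
  calc (2 : ℝ) ^ x ≤ 2 ^ (3 / 2 : ℝ) := Real.rpow_le_rpow_of_exponent_le one_le_two hx
    _ < 3 := lt_of_pow_lt_pow_left₀ 2 zero_le_three (by rw [hsq]; norm_num)

theorem two_rpow_lt_setRamseyCycle {r k ℓ : ℕ} (hk : 2 ≤ k) (hrk : k ≤ r) (hℓ : 2 ≤ ℓ)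
    (hodd : Odd ℓ) : (2 : ℝ) ^ (((r : ℝ) - 1) / ((k : ℝ) - 1)) < setRamseyCycle r k ℓ := by
  have hk₀ : k ≠ 0 := by omega
  obtain hsmall | hr₁ := lt_or_ge (2 * r) (3 * k)
  · have hcode : HasBinaryCode r 2 k := (HasBinaryCode.two_words r).mono le_rfl hrk
    have hx : ((r : ℝ) - 1) / ((k : ℝ) - 1) ≤ 3 / 2 := by
      have hk' : (2 : ℝ) ≤ k := by exact_mod_cast hk
      have hsmall' : (2 : ℝ) * r + 1 ≤ 3 * k := by exact_mod_cast hsmall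
      rw [div_le_iff₀ (by linarith)]
      linarith
    exact (two_rpow_lt_three hx).trans_le (by exact_mod_cast hcode.lt_setRamseyCycle hk₀ hℓ hodd)
  obtain hmedium | hr₂ := lt_or_ge r (2 * k)
  · have hcode : HasBinaryCode r (2 ^ 2) k := HasBinaryCode.four_words hr₁
    exact (two_rpow_div_le_two_pow (m := 2) hk (by omega)).trans_lt
      (by exact_mod_cast hcode.lt_setRamseyCycle hk₀ hℓ hodd)
  · let m := (r - 2 * k) / (k - 1)
    have hm₁ : m * (k - 1) ≤ r - 2 * k := Nat.div_mul_le_self _ _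
    have hm₂ : r - 2 * k < (m + 1) * (k - 1) := Nat.lt_mul_of_div_lt (Nat.lt_succ_self m) (by omega)
    have hcode : HasBinaryCode r (2 ^ (m + 3)) k :=
      (HasBinaryCode.two_pow_words hk m).mono (by omega) le_rfl
    refine (two_rpow_div_le_two_pow hk ?_).trans_lt
      (by exact_mod_cast hcode.lt_setRamseyCycle hk₀ hℓ hodd)
    rw [add_mul] at hm₂ ⊢
    omega

/-- **Theorem.** For every odd `ℓ` and all `r ≥ k ≥ 2`, the set-Ramsey number of the
cycle satisfies `R_{r,k}(C_ℓ) > max { 2^((r-1)/(k-1)), 2^(⌊r/k⌋-1)·(ℓ-1) }`, where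
the first power is a real power. -/
theorem setRamseyCycle_lower (r k ℓ : ℕ) (hk : 2 ≤ k) (hrk : k ≤ r)
    (hℓ : 3 ≤ ℓ) (hodd : Odd ℓ) :
    max ((2 : ℝ) ^ (((r : ℝ) - 1) / ((k : ℝ) - 1)))
        ((2 : ℝ) ^ (r / k - 1) * ((ℓ : ℝ) - 1))
      < (setRamseyCycle r k ℓ : ℝ) := by
  refine max_lt (two_rpow_lt_setRamseyCycle hk hrk (by omega) hodd) ?_
  have hq : 1 ≤ r / k := Nat.div_pos hrk (by omega)
  have hr : (r / k - 1 + 1) * k ≤ r := by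
    rw [Nat.sub_add_cancel hq]
    exact Nat.div_mul_le_self r k
  have h := two_pow_mul_lt_setRamseyCycle (ℓ := ℓ) (by omega) hr (by omega) hodd
  rw [← Nat.cast_pred (by omega)]
  exact_mod_cast h
end
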